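/- Let χ be an odd primitive Dirichlet character modulo q (q > 1), and let α, β ∈ ℂ with Re(√α) > Re(√β) > 0. Then Σ_{n=1}^∞ χ(n) e^{−(πn/√(2q))(√α+√β)} sinh((πn/√(2q))(√α−√β)) = (−i q τ(χ)(α−β)/π) Σ_{n=1}^∞ n·χ̄(n)/((2n² + αq)(2n² + βq)). -/

import Mathlib

open scoped Real

/-- Principal branch complex square root. -/
noncomputable def csqrt (z : ℂ) : ℂ := z ^ ((1 : ℂ)/2)

/-- The Gauss sum of a Dirichlet character mod q. -/
noncomputable def gsum (q : ℕ) (χ : DirichletCharacter ℂ q) : ℂ :=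
  ∑ m ∈ Finset.Icc 1 q, χ (m : ZMod q) * Complex.exp (2 * (π : ℂ) * Complex.I * m / q)

/-!
For `f : ZMod q → ℂ`, decomposing `ℤ` into residue classes and applying the partial fraction
expansion of the cotangent to each class gives
`∑ₙ f n (1 / (z + n) - 1 / (w + n)) = C f z - C f w`, where
`C f z = (π / q) ∑ⱼ f j cot (π (z + j) / q)`; the difference of two points is what makes the series
over `ℤ` converge absolutely. In the upper half plane the `q`-expansion of the cotangent turns
`C f z` into a power series in `exp (2 π i z / q)` whose coefficients are the inverse Fourier
transform of `f`. For `f = 𝓕 χ` these coefficients are `χ n`, while `f n = -τ(χ) χ⁻¹ n` because `χ`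
is primitive and odd, and folding `n` with `-n` yields a rational series over `n ≥ 1`. The theorem
is the case `z = i q √β / √(2q)`, `w = i q √α / √(2q)`.
-/

open Complex Finset
open scoped ZMod

theorem hasSum_add_one_add_neg_add_one {G : Type*} [AddCommGroup G] [TopologicalSpace G]
    [IsTopologicalAddGroup G] {f : ℤ → G} {a : G} (hf : HasSum f a) :
    HasSum (fun n : ℕ ↦ f (n + 1) + f (-(n + 1))) (a - f 0) := by
  simpa [add_sub_add_right_eq_sub, ← sub_sub] using (hasSum_nat_add_iff' 1).2 hf.nat_add_neg

theorem hasSum_int_of_residueClasses {M : Type*} [AddCommMonoid M] [TopologicalSpace M]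
    [ContinuousAdd M] {q : ℕ} [NeZero q] {f : ℤ → M} {a : ZMod q → M}
    (h : ∀ j : ZMod q, HasSum (fun k : ℤ ↦ f (j.val + q * k)) (a j)) :
    HasSum f (∑ j, a j) := by
  have cast_mem (j : ZMod q) (k : ℤ) : ((j.val + q * k : ℤ) : ZMod q) = j := by simp
  have injective (j : ZMod q) : Function.Injective fun k : ℤ ↦ (j.val + q * k : ℤ) :=
    fun _ _ hk ↦ mul_left_cancel₀ (Int.natCast_ne_zero.2 (NeZero.ne q)) (add_left_cancel hk)
  have disjoint : ((univ : Finset (ZMod q)) : Set (ZMod q)).Pairwise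
      (Function.onFun Disjoint fun j ↦ Set.range fun k : ℤ ↦ (j.val + q * k : ℤ)) := by
    refine fun i _ j _ hij ↦ Set.disjoint_left.2 ?_
    rintro _ ⟨k, rfl⟩ ⟨l, hl⟩
    exact hij (by simpa only [cast_mem] using (congrArg (Int.cast : ℤ → ZMod q) hl).symm)
  have cover : ⋃ j ∈ (univ : Finset (ZMod q)), Set.range (fun k : ℤ ↦ (j.val + q * k : ℤ)) =
      Set.univ := by
    refine Set.eq_univ_of_forall fun n ↦ Set.mem_biUnion (mem_univ (n : ZMod q)) ⟨n / q, ?_⟩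
    simp only [ZMod.val_intCast, Int.emod_add_mul_ediv]
  have hsum := hasSum_sum_disjoint univ disjoint fun j _ ↦ (injective j).hasSum_range_iff.2 (h j)
  rwa [cover, hasSum_subtype_iff_indicator, Set.indicator_univ] at hsum

theorem summable_one_div_add_int_sub {z w : ℂ} (hz : z ∈ integerComplement)
    (hw : w ∈ integerComplement) : Summable fun k : ℤ ↦ 1 / (z + k) - 1 / (w + k) := by
  have h : Summable fun k : ℤ ↦ ((z + k) * (w + k))⁻¹ := by
    apply EisensteinSeries.summable_inv_of_isBigO_rpow_inv (a := 2) one_lt_two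
    simpa [pow_two] using (EisensteinSeries.linear_inv_isBigO_right 1 w).mul
      (EisensteinSeries.linear_inv_isBigO_right 1 z)
  refine (h.mul_left (w - z)).congr fun k ↦ ?_
  have hzk := integerComplement_add_ne_zero hz k
  have hwk := integerComplement_add_ne_zero hw k
  field_simp
  ring

theorem hasSum_one_div_add_int_sub {z w : ℂ} (hz : z ∈ integerComplement)
    (hw : w ∈ integerComplement) :
    HasSum (fun k : ℤ ↦ 1 / (z + k) - 1 / (w + k)) (π * cot (π * z) - π * cot (π * w)) := by
  have hasSum_cotTerm {v : ℂ} (hv : v ∈ integerComplement) :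
      HasSum (cotTerm v) (π * cot (π * v) - 1 / v) :=
    cot_series_rep' hv ▸ (summable_cotTerm hv).hasSum
  have folded : HasSum (fun n : ℕ ↦ cotTerm z n - cotTerm w n)
      (∑' k : ℤ, (1 / (z + k) - 1 / (w + k)) - (1 / z - 1 / w)) := by
    convert! hasSum_add_one_add_neg_add_one (summable_one_div_add_int_sub hz hw).hasSum using 1
    · funext n
      push_cast
      ring
    · simp
  have h := folded.unique ((hasSum_cotTerm hz).sub (hasSum_cotTerm hw))
  convert (summable_one_div_add_int_sub hz hw).hasSum using 1
  linear_combination -h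

theorem hasSum_exp_two_pi_I_mul {z : ℂ} (hz : 0 < z.im) :
    HasSum (fun n : ℕ ↦ exp (2 * π * I * ((n + 1) * z))) ((I * cot (π * z) - 1) / 2) := by
  set r := exp (2 * π * I * z) with hr_def
  have hr : ‖r‖ < 1 := UpperHalfPlane.norm_exp_two_pi_I_lt_one ⟨z, hz⟩
  have one_sub_ne_zero : 1 - r ≠ 0 := sub_ne_zero.2 fun h ↦ by simp [← h] at hr
  convert! (hasSum_geometric_of_norm_lt_one hr).mul_left r using 1
  · funext n
    rw [← pow_succ', ← exp_nat_mul]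
    congr 1
    push_cast
    ring
  · rw [cot_pi_eq_exp_ratio, ← hr_def]
    field_simp
    ring

section CotSum

variable {q : ℕ} [NeZero q]

/-- The regularisation of the divergent series `∑ n : ℤ, f n / (z + n)` for a function `f` of
period `q`: each residue class `j + q ℤ` is summed symmetrically, which gives a cotangent. -/
noncomputable def cotSum (f : ZMod q → ℂ) (z : ℂ) : ℂ :=
  ∑ j : ZMod q, f j * (π / q * cot (π * ((z + j.val) / q)))

theorem add_natCast_div_mem_integerComplement {z : ℂ} (hz : z ∈ integerComplement) (j : ℕ) :
    (z + j) / q ∈ integerComplement := by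
  rintro ⟨k, hk⟩
  rw [eq_div_iff (NeZero.ne (q : ℂ))] at hk
  exact hz ⟨k * q - j, by push_cast; linear_combination hk⟩

theorem hasSum_mul_one_div_add_int_sub (f : ZMod q → ℂ) {z w : ℂ} (hz : z ∈ integerComplement)
    (hw : w ∈ integerComplement) :
    HasSum (fun n : ℤ ↦ f n * (1 / (z + n) - 1 / (w + n))) (cotSum f z - cotSum f w) := by
  rw [cotSum, cotSum, ← sum_sub_distrib]
  refine hasSum_int_of_residueClasses fun j ↦ ?_
  have rescale (v : ℂ) (k : ℤ) :
      1 / (v + (j.val + q * k : ℤ)) = 1 / q * (1 / ((v + j.val) / q + k)) := by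
    rw [one_div_mul_one_div, mul_add, mul_div_cancel₀ _ (NeZero.ne (q : ℂ))]
    push_cast
    rw [add_assoc]
  have class_hasSum := hasSum_one_div_add_int_sub
    (add_natCast_div_mem_integerComplement (q := q) hz j.val)
    (add_natCast_div_mem_integerComplement (q := q) hw j.val)
  convert! class_hasSum.mul_left (f j * (1 / q)) using 1
  · funext k
    rw [rescale, rescale]
    simp only [Int.cast_add, Int.cast_natCast, Int.cast_mul, ZMod.natCast_zmod_val,
      CharP.cast_eq_zero, zero_mul, add_zero]
    ring
  · ring

theorem stdAddChar_mul_exp (j : ZMod q) (n : ℕ) (z : ℂ) :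
    ZMod.stdAddChar (j * (n : ZMod q)) * exp (2 * π * I * (n * (z / q))) =
      exp (2 * π * I * (n * ((z + j.val) / q))) := by
  have h := ZMod.stdAddChar_coe (N := q) (j.val * n)
  push_cast [ZMod.natCast_zmod_val] at h
  rw [h, ← exp_add]
  congr 1
  ring

theorem hasSum_invDFT_mul_exp (f : ZMod q → ℂ) {z : ℂ} (hz : 0 < z.im) :
    HasSum (fun n : ℕ ↦ 𝓕⁻ f ((n + 1 : ℕ) : ZMod q) * exp (2 * π * I * ((n + 1) * (z / q))))
      (I / (2 * π) * cotSum f z - (∑ j, f j) / (2 * q)) := by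
  have im_pos (j : ZMod q) : 0 < ((z + j.val) / q).im := by
    rw [div_natCast_im]
    simpa only [add_im, natCast_im, add_zero] using div_pos hz (Nat.cast_pos.2 (NeZero.pos q))
  convert! hasSum_sum (s := univ) fun j _ ↦
    (hasSum_exp_two_pi_I_mul (im_pos j)).mul_left ((q : ℂ)⁻¹ * f j) using 1
  · funext n
    rw [ZMod.invDFT_apply, smul_eq_mul, mul_sum, sum_mul]
    refine sum_congr rfl fun j _ ↦ ?_
    have h := stdAddChar_mul_exp j (n + 1) z
    push_cast at h ⊢
    rw [← h, smul_eq_mul]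
    ring
  · rw [cotSum, mul_sum, sum_div, ← sum_sub_distrib]
    refine sum_congr rfl fun j _ ↦ ?_
    field_simp

theorem hasSum_mul_div_sq_sub_sq_of_odd {f : ZMod q → ℂ} (hf : f.Odd) {z w : ℂ}
    (hz : z ∈ integerComplement) (hw : w ∈ integerComplement) :
    HasSum (fun n : ℕ ↦ 2 * (z ^ 2 - w ^ 2) * ((n + 1) * f ((n + 1 : ℕ) : ZMod q) /
      (((n + 1) ^ 2 - z ^ 2) * ((n + 1) ^ 2 - w ^ 2)))) (cotSum f z - cotSum f w) := by
  convert! hasSum_add_one_add_neg_add_one (hasSum_mul_one_div_add_int_sub f hz hw) using 1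
  · funext n
    have add_ne_zero {v : ℂ} (hv : v ∈ integerComplement) : v + (n + 1) ≠ 0 := by
      simpa using integerComplement_add_ne_zero hv (n + 1)
    have sub_ne_zero {v : ℂ} (hv : v ∈ integerComplement) : v - (n + 1) ≠ 0 := by
      simpa [sub_eq_add_neg, add_comm] using integerComplement_add_ne_zero hv (-(n + 1))
    have hz_add := add_ne_zero hz
    have hz_sub := sub_ne_zero hz
    have hw_add := add_ne_zero hw
    have hw_sub := sub_ne_zero hw
    have factor (v : ℂ) : ((n : ℂ) + 1) ^ 2 - v ^ 2 = -((v + (n + 1)) * (v - (n + 1))) := by ring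
    push_cast
    rw [hf, factor, factor, ← sub_eq_add_neg, ← sub_eq_add_neg]
    field_simp
    ring
  · have hf0 : f 0 = 0 := by simpa [self_eq_neg] using hf 0
    simp [hf0]

theorem tsum_invDFT_mul_exp_sub_exp_of_odd {f : ZMod q → ℂ} (hf : f.Odd) {z w : ℂ}
    (hz : 0 < z.im) (hw : 0 < w.im) :
    ∑' n : ℕ, 𝓕⁻ f ((n + 1 : ℕ) : ZMod q) *
        (exp (2 * π * I * ((n + 1) * (z / q))) - exp (2 * π * I * ((n + 1) * (w / q)))) =
      I / π * (z ^ 2 - w ^ 2) * ∑' n : ℕ, (n + 1) * f ((n + 1 : ℕ) : ZMod q) /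
        (((n + 1) ^ 2 - z ^ 2) * ((n + 1) ^ 2 - w ^ 2)) := by
  have rational := (hasSum_mul_div_sq_sub_sq_of_odd hf
    (UpperHalfPlane.coe_mem_integerComplement ⟨z, hz⟩)
    (UpperHalfPlane.coe_mem_integerComplement ⟨w, hw⟩)).tsum_eq
  have exponential := ((hasSum_invDFT_mul_exp f hz).sub (hasSum_invDFT_mul_exp f hw)).tsum_eq
  rw [tsum_mul_left] at rational
  simp only [← mul_sub] at exponential
  rw [exponential]
  linear_combination -(I / (2 * π)) * rational

end CotSum

section Character

variable {q : ℕ} [NeZero q] {χ : DirichletCharacter ℂ q}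

theorem sum_Icc_one_natCast {M : Type*} [AddCommMonoid M] (f : ZMod q → M) :
    ∑ m ∈ Icc 1 q, f m = ∑ j, f j := by
  refine sum_nbij' (fun m ↦ m) (fun j ↦ (j - 1).val + 1) (fun _ _ ↦ mem_univ _)
    (fun j _ ↦ mem_Icc.2 ⟨Nat.le_add_left 1 _, ZMod.val_lt _⟩) (fun m hm ↦ ?_)
    (fun j _ ↦ by simp) (fun _ _ ↦ rfl)
  obtain ⟨one_le, le_q⟩ := mem_Icc.1 hm
  obtain ⟨k, rfl⟩ := Nat.exists_eq_add_of_le' one_le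
  simp [ZMod.val_cast_of_lt (Nat.lt_of_succ_le le_q)]

theorem gsum_eq_gaussSum (χ : DirichletCharacter ℂ q) : gsum q χ = gaussSum χ ZMod.stdAddChar := by
  rw [gsum, gaussSum, ← sum_Icc_one_natCast]
  refine sum_congr rfl fun m _ ↦ ?_
  simpa using congrArg (χ m * ·) (ZMod.stdAddChar_coe (N := q) m).symm

theorem dft_eq_neg_gsum_mul_inv (hprim : χ.IsPrimitive) (hodd : χ.Odd) (k : ZMod q) :
    𝓕 χ k = -gsum q χ * χ⁻¹ k := by
  have inv_odd : χ⁻¹ (-1) = -1 := by rw [MulChar.inv_apply_eq_inv', hodd, inv_neg_one]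
  rw [hprim.fourierTransform_eq_inv_mul_gaussSum, gsum_eq_gaussSum, ← neg_one_mul k, map_mul,
    inv_odd]
  ring

theorem tsum_mul_exp_sub_exp_of_isPrimitive_of_odd (hprim : χ.IsPrimitive) (hodd : χ.Odd)
    {z w : ℂ} (hz : 0 < z.im) (hw : 0 < w.im) :
    ∑' n : ℕ, χ ((n + 1 : ℕ) : ZMod q) *
        (exp (2 * π * I * ((n + 1) * (z / q))) - exp (2 * π * I * ((n + 1) * (w / q)))) =
      -(I / π) * gsum q χ * (z ^ 2 - w ^ 2) *
        ∑' n : ℕ, (n + 1) * (starRingEnd ℂ) (χ ((n + 1 : ℕ) : ZMod q)) /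
          (((n + 1) ^ 2 - z ^ 2) * ((n + 1) ^ 2 - w ^ 2)) := by
  have h := tsum_invDFT_mul_exp_sub_exp_of_odd (ZMod.dft_odd_iff.2 hodd.to_fun) hz hw
  have conj_eq (k : ZMod q) : χ⁻¹ k = (starRingEnd ℂ) (χ k) := (MulChar.star_apply' χ k).symm
  simp only [LinearEquiv.symm_apply_apply, dft_eq_neg_gsum_mul_inv hprim hodd, conj_eq,
    mul_left_comm _ (-gsum q χ), mul_div_assoc (-gsum q χ), tsum_mul_left] at h
  rw [h]
  ring

end Character

theorem csqrt_sq (z : ℂ) : csqrt z ^ 2 = z := by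
  rw [csqrt, one_div]
  exact_mod_cast cpow_nat_inv_pow z two_ne_zero

theorem csqrt_ofReal {x : ℝ} (hx : 0 ≤ x) : csqrt x = √x := by
  rw [csqrt, Real.sqrt_eq_rpow, ofReal_cpow hx]
  norm_num

theorem exp_neg_mul_add_mul_sinh_mul_sub (t a b : ℂ) :
    exp (-t * (a + b)) * sinh (t * (a - b)) = (exp (-(2 * t * b)) - exp (-(2 * t * a))) / 2 := by
  rw [sinh, mul_div_assoc', mul_sub, ← exp_add, ← exp_add]
  ring_nf

theorem I_mul_csqrt_sq_div (q : ℕ) [NeZero q] (γ : ℂ) :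
    (I * (q * csqrt γ / csqrt (2 * q))) ^ 2 = -(γ * q / 2) := by
  rw [mul_pow, I_sq, div_pow, mul_pow, csqrt_sq, csqrt_sq]
  field_simp

theorem im_I_mul_csqrt_pos (q : ℕ) [NeZero q] {γ : ℂ} (hγ : 0 < (csqrt γ).re) :
    0 < (I * (q * csqrt γ / csqrt (2 * q))).im := by
  have csqrt_eq : csqrt (2 * q) = √(2 * q) := by
    rw [← csqrt_ofReal (by positivity)]
    push_cast
    rfl
  have q_pos : (0 : ℝ) < q := Nat.cast_pos.2 (NeZero.pos q)
  rw [I_mul_im, csqrt_eq, div_ofReal_re, mul_re, natCast_re, natCast_im, zero_mul, sub_zero]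
  positivity

theorem stmt11_general {q : ℕ} [NeZero q] {χ : DirichletCharacter ℂ q} (hprim : χ.IsPrimitive)
    (hodd : χ (-1) = -1) {α β : ℂ} (hα : 0 < (csqrt α).re) (hβ : 0 < (csqrt β).re) :
    ∑' n : ℕ, χ ((n + 1 : ℕ) : ZMod q) *
        exp (-(π * (n + 1) / csqrt (2 * q)) * (csqrt α + csqrt β)) *
        sinh (π * (n + 1) / csqrt (2 * q) * (csqrt α - csqrt β)) =
      -I * q * gsum q χ * (α - β) / π *
        ∑' n : ℕ, (n + 1) * (starRingEnd ℂ) (χ ((n + 1 : ℕ) : ZMod q)) /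
          ((2 * (n + 1) ^ 2 + α * q) * (2 * (n + 1) ^ 2 + β * q)) := by
  have hq : (q : ℂ) ≠ 0 := NeZero.ne _
  have h := tsum_mul_exp_sub_exp_of_isPrimitive_of_odd hprim hodd
    (im_I_mul_csqrt_pos q hβ) (im_I_mul_csqrt_pos q hα)
  have exponent (n : ℕ) (γ : ℂ) :
      2 * π * I * ((n + 1) * (I * (q * csqrt γ / csqrt (2 * q)) / q)) =
        -(2 * (π * (n + 1) / csqrt (2 * q)) * csqrt γ) := by
    field_simp
    rw [I_sq]
    ring
  have denominator (n : ℕ) (γ : ℂ) :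
      ((n : ℂ) + 1) ^ 2 - -(γ * q / 2) = (2 * (n + 1) ^ 2 + γ * q) / 2 := by ring
  have halve (x A B : ℂ) : x / (A / 2 * (B / 2)) = 4 * (x / (B * A)) := by
    field_simp
    norm_num
  simp only [I_mul_csqrt_sq_div, exponent, denominator, halve, tsum_mul_left] at h
  simp only [mul_assoc, exp_neg_mul_add_mul_sinh_mul_sub, mul_div_assoc', tsum_div_const] at h ⊢
  linear_combination h / 2

theorem stmt11 (q : ℕ) (hq : 1 < q) (χ : DirichletCharacter ℂ q)
    (hprim : χ.IsPrimitive) (hodd : χ (-1) = -1) (α β : ℂ)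
    (hαβ : (csqrt β).re < (csqrt α).re) (hβ : 0 < (csqrt β).re) :
    ∑' n : ℕ, χ ((n + 1 : ℕ) : ZMod q) *
        Complex.exp (-((π : ℂ) * ((n : ℂ) + 1) / csqrt (2 * q)) * (csqrt α + csqrt β)) *
        Complex.sinh ((π : ℂ) * ((n : ℂ) + 1) / csqrt (2 * q) * (csqrt α - csqrt β))
      = -Complex.I * q * gsum q χ * (α - β) / (π : ℂ) *
        ∑' n : ℕ, ((n : ℂ) + 1) * (starRingEnd ℂ) (χ ((n + 1 : ℕ) : ZMod q)) /
          ((2 * ((n : ℂ) + 1)^2 + α * q) * (2 * ((n : ℂ) + 1)^2 + β * q)) := by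
  have : NeZero q := ⟨by omega⟩
  exact stmt11_general hprim hodd (hβ.trans hαβ) hβ
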